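/- Let g = m ⋈_θ h be a cocycle double cross sum Lie algebra (bicocycle double cross sum with γ = 0), and let Ũ(m) := U(g)/U(g)U(h)⁺ where U(h)⁺ = ker ε ∩ U(h). Then the multiplication map Ũ(m) ⊗ U(h) → U(g) induced by a PBW basis adapted to the decomposition g = m ⊕ h is an isomorphism of coalgebras, and consequently U(m ⋈_θ h) ≅ Ũ(m) ⋈_θ U(h) as bialgebras, a cocycle double cross product bialgebra. -/

import Mathlib

open TensorProduct LinearMap

set_option synthInstance.maxHeartbeats 2000000
set_option maxHeartbeats 4000000

section

variable (k : Type*) [Field k]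

/-- Sweedler pairing: `(a ⊗ b) ↦ u(a₍₁₎ ⊗ b₍₁₎) ⊗ v(a₍₂₎ ⊗ b₍₂₎)`. -/
noncomputable def sweedlerPair {A B C D : Type*}
    [AddCommGroup A] [Module k A] [AddCommGroup B] [Module k B]
    [AddCommGroup C] [Module k C] [AddCommGroup D] [Module k D]
    (dA : A →ₗ[k] A ⊗[k] A) (dB : B →ₗ[k] B ⊗[k] B)
    (u : A ⊗[k] B →ₗ[k] C) (v : A ⊗[k] B →ₗ[k] D) :
    A ⊗[k] B →ₗ[k] C ⊗[k] D :=
  (TensorProduct.map u v) ∘ₗ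
    (TensorProduct.tensorTensorTensorComm k A A B B).toLinearMap ∘ₗ
    (TensorProduct.map dA dB)

/-- The multiplication of the (right) cocycle double cross product
`(x⊗h)(x'⊗h') = x₍₁₎·(h₍₁₎▷x'₍₁₎) ⊗ θ(x₍₂₎, h₍₂₎▷x'₍₂₎) ψ(h₍₃₎, x'₍₃₎) h'`. -/
noncomputable def cdcpMul (M H : Type*)
    [AddCommGroup M] [Module k M] [AddCommGroup H] [Module k H]
    (dM : M →ₗ[k] M ⊗[k] M) (dH : H →ₗ[k] H ⊗[k] H)
    (act : H ⊗[k] M →ₗ[k] M) (psi : H ⊗[k] M →ₗ[k] H)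
    (mM : M ⊗[k] M →ₗ[k] M) (th : M ⊗[k] M →ₗ[k] H)
    (mH : H ⊗[k] H →ₗ[k] H) :
    (M ⊗[k] H) ⊗[k] (M ⊗[k] H) →ₗ[k] M ⊗[k] H :=
  letI Θ : H ⊗[k] M →ₗ[k] M ⊗[k] (M ⊗[k] H) :=
    sweedlerPair k dH dM act (sweedlerPair k dH dM act psi)
  letI R : M ⊗[k] ((M ⊗[k] H) ⊗[k] H) →ₗ[k] H :=
    mH ∘ₗ (LinearMap.rTensor H mH) ∘ₗ
      (LinearMap.rTensor H (LinearMap.rTensor H th)) ∘ₗ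
      (LinearMap.rTensor H ((TensorProduct.assoc k M M H).symm.toLinearMap)) ∘ₗ
      (TensorProduct.assoc k M (M ⊗[k] H) H).symm.toLinearMap
  (TensorProduct.map mM R) ∘ₗ
    (TensorProduct.tensorTensorTensorComm k M M M ((M ⊗[k] H) ⊗[k] H)).toLinearMap ∘ₗ
    (LinearMap.lTensor (M ⊗[k] M)
      ((TensorProduct.assoc k M (M ⊗[k] H) H).toLinearMap)) ∘ₗ
    (LinearMap.lTensor (M ⊗[k] M) (LinearMap.rTensor H Θ)) ∘ₗ
    (LinearMap.lTensor (M ⊗[k] M) ((TensorProduct.assoc k H M H).symm.toLinearMap)) ∘ₗ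
    (TensorProduct.assoc k (M ⊗[k] M) H (M ⊗[k] H)).toLinearMap ∘ₗ
    (LinearMap.rTensor (M ⊗[k] H) (LinearMap.rTensor H dM))

/-!
By the Poincaré–Birkhoff–Witt theorem, proved here by letting `g` act on the free module on the
multisets of letters, the increasing monomials in a basis form a basis of the enveloping algebra.
If the letters outside a subalgebra `h` come first, an increasing monomial is uniquely a monomial
in letters outside `h` times a monomial in letters of `h`. Hence multiplication gives
`C ⊗ U(h) ≅ U(g)`, where the span `C` of the monomials in letters outside `h` is closed under
comultiplication and complementary to `U(g) U(h)⁺`, so that `C ≅ U(g) / U(g) U(h)⁺` as coalgebras.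
Any factorization `Q ⊗ H ≅ U` of a bialgebra by coalgebra maps into the bialgebra `U` yields the
data of a cocycle double cross product: the coalgebra maps `H ⊗ Q → Q ⊗ H` and `Q ⊗ Q → Q ⊗ H`
induced by the multiplication of `U` are recovered from their two components.
-/

namespace PBW

section Multiset

theorem multiset_add_injective_of_disjoint {I : Type*} {S T : Set I} (hST : Disjoint S T) :
    Function.Injective fun p : {M : Multiset I | ∀ i ∈ M, i ∈ S} ×
      {M : Multiset I | ∀ i ∈ M, i ∈ T} => p.1.1 + p.2.1 := by
  classical
  have hfilter {M N : Multiset I} (hM : ∀ i ∈ M, i ∈ S) (hN : ∀ i ∈ N, i ∈ T) :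
      (M + N).filter (· ∈ S) = M := by
    rw [Multiset.filter_add, Multiset.filter_eq_self.2 hM,
      Multiset.filter_eq_nil.2 fun i hi hiS => hST.notMem_of_mem_left hiS (hN i hi), add_zero]
  rintro ⟨⟨M, hM⟩, ⟨N, hN⟩⟩ ⟨⟨M', hM'⟩, ⟨N', hN'⟩⟩ heq
  obtain rfl : M = M' := by rw [← hfilter hM hN, ← hfilter hM' hN']; exact congrArg _ heq
  obtain rfl : N = N' := add_left_cancel heq
  rfl

variable {I : Type*} [LinearOrder I]

@[elab_as_elim]
theorem multiset_induction_on_min {p : Multiset I → Prop} (zero : p 0)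
    (cons : ∀ i M, (∀ j ∈ M, i ≤ j) → p M → p (i ::ₘ M)) (M : Multiset I) : p M := by
  induction hs : M.sort (· ≤ ·) generalizing M with
  | nil => rwa [← M.sort_eq (· ≤ ·), hs]
  | cons i l ih =>
    have hsorted := M.pairwise_sort (· ≤ ·)
    rw [hs, List.pairwise_cons] at hsorted
    rw [← M.sort_eq (· ≤ ·), hs]
    refine cons i l (by simpa using hsorted.1) (ih l ?_)
    rw [Multiset.coe_sort, List.mergeSort_eq_self _ (by simpa using hsorted.2)]

theorem exists_eq_cons_of_not_forall_le {i : I} {M : Multiset I} (h : ¬ ∀ j ∈ M, i ≤ j) :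
    ∃ j N, M = j ::ₘ N ∧ (∀ l ∈ N, j ≤ l) ∧ j < i := by
  induction M using multiset_induction_on_min with
  | zero => simp at h
  | cons j N hN _ =>
    refine ⟨j, N, rfl, hN, ?_⟩
    contrapose! h
    exact Multiset.forall_mem_cons.2 ⟨h, fun l hl => h.trans (hN l hl)⟩

end Multiset

section Filtration

variable {R L V I : Type*} [CommRing R] [LieRing L] [LieAlgebra R L] [AddCommGroup V] [Module R V]

/-- The span of the members of the family `e` indexed by multisets of at most `n` letters taken
from `S`. It filters both the polynomial module `Multiset I →₀ R`, on which a Lie algebra with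
basis indexed by `I` acts, and the enveloping algebra. -/
def degreeSpan (R : Type*) {V I : Type*} [CommRing R] [AddCommGroup V] [Module R V]
    (e : Multiset I → V) (S : Set I) (n : ℕ) : Submodule R V :=
  Submodule.span R (e '' {M | (∀ i ∈ M, i ∈ S) ∧ M.card ≤ n})

theorem degreeSpan_mono (e : Multiset I → V) (S : Set I) : Monotone (degreeSpan R e S) :=
  fun _ _ h => Submodule.span_mono (Set.image_mono fun _ hM => ⟨hM.1, hM.2.trans h⟩)

theorem mem_degreeSpan (e : Multiset I → V) {S : Set I} {M : Multiset I} (hM : ∀ i ∈ M, i ∈ S) :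
    e M ∈ degreeSpan R e S M.card :=
  Submodule.subset_span ⟨M, ⟨hM, le_rfl⟩, rfl⟩

theorem apply_mem_degreeSpan_succ {b : I → L} {e : Multiset I → V} {S : Set I}
    {A : L →ₗ[R] Module.End R V} {n : ℕ}
    (hA : ∀ i ∈ S, ∀ M : Multiset I, (∀ j ∈ M, j ∈ S) → M.card < n →
      A (b i) (e M) - e (i ::ₘ M) ∈ degreeSpan R e S M.card)
    {x : L} (hx : x ∈ Submodule.span R (b '' S)) {m : ℕ} (hm : m < n)
    {v : V} (hv : v ∈ degreeSpan R e S m) : A x v ∈ degreeSpan R e S (m + 1) := by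
  have hbasis : ∀ i ∈ S, ∀ M ∈ {M : Multiset I | (∀ j ∈ M, j ∈ S) ∧ M.card ≤ m},
      A (b i) (e M) ∈ degreeSpan R e S (m + 1) := by
    rintro i hi M ⟨hMS, hMm⟩
    have hlead : e (i ::ₘ M) ∈ degreeSpan R e S (m + 1) :=
      Submodule.subset_span ⟨_, ⟨Multiset.forall_mem_cons.2 ⟨hi, hMS⟩, by simpa using hMm⟩, rfl⟩
    rw [← sub_add_cancel (A (b i) (e M)) (e (i ::ₘ M))]
    exact add_mem (degreeSpan_mono e S (by omega) (hA i hi M hMS (by omega))) hlead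
  induction hx, hv using Submodule.span_induction₂ with
  | mem_mem x v hx hv =>
    obtain ⟨i, hi, rfl⟩ := hx
    obtain ⟨M, hM, rfl⟩ := hv
    exact hbasis i hi M hM
  | zero_left v _ => simp
  | zero_right x _ => simp
  | add_left x y v _ _ _ hx hy => simpa using add_mem hx hy
  | add_right x v w _ _ _ hv hw => simpa using add_mem hv hw
  | smul_left c x v _ _ h => simpa using Submodule.smul_mem _ c h
  | smul_right c x v _ _ h => simpa using Submodule.smul_mem _ c h

end Filtration

section PolynomialModule

variable {R L I : Type*} [CommRing R] [LieRing L] [LieAlgebra R L]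

/-- The span in `Multiset I →₀ R` of the monomials of degree at most `n`. -/
noncomputable abbrev degreeLE (R I : Type*) [CommRing R] (n : ℕ) : Submodule R (Multiset I →₀ R) :=
  degreeSpan R (fun M => .single M 1) Set.univ n

theorem single_mem_degreeLE {M : Multiset I} {n : ℕ} (hM : M.card ≤ n) :
    .single M 1 ∈ degreeLE R I n :=
  degreeSpan_mono _ _ hM (mem_degreeSpan _ fun _ _ => Set.mem_univ _)

variable {b : Module.Basis I R L} {A : L →ₗ[R] Module.End R (Multiset I →₀ R)} {n m : ℕ}

theorem apply_mem_degreeLE_succ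
    (hA : ∀ i (M : Multiset I), M.card < n →
      A (b i) (.single M 1) - .single (i ::ₘ M) 1 ∈ degreeLE R I M.card)
    (x : L) (hm : m < n) {v : Multiset I →₀ R} (hv : v ∈ degreeLE R I m) :
    A x v ∈ degreeLE R I (m + 1) :=
  apply_mem_degreeSpan_succ (b := b) (fun i _ M _ hM => hA i M hM)
    (by rw [Set.image_univ, b.span_eq]; exact Submodule.mem_top) hm hv

theorem apply_eq_apply_of_mem_degreeLE {A' : L →ₗ[R] Module.End R (Multiset I →₀ R)}
    (h : ∀ i (M : Multiset I), M.card < n → A (b i) (.single M 1) = A' (b i) (.single M 1))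
    (x : L) (hm : m < n) {v : Multiset I →₀ R} (hv : v ∈ degreeLE R I m) :
    A x v = A' x v := by
  suffices Set.EqOn (A x) (A' x) (degreeLE R I m) from this hv
  refine LinearMap.eqOn_span ?_
  rintro _ ⟨M, ⟨-, hM⟩, rfl⟩
  have : A.flip (.single M 1) = A'.flip (.single M 1) := b.ext fun i => h i M (by omega)
  exact LinearMap.congr_fun this x

end PolynomialModule

section Action

variable {R L I : Type*} [CommRing R] [LieRing L] [LieAlgebra R L] [LinearOrder I]
  (b : Module.Basis I R L)

/-- The value on the monomial `M` of the operator attached to the `i`-th basis vector, computed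
from an operator `A` that is already correct on monomials of smaller degree. If `j < i` is the
least letter of `M = j ::ₘ N`, it rewrites `b i * b j * N` as `b j * b i * N + ⁅b i, b j⁆ * N`,
where the leading term `i ::ₘ N` of `b i * N` is multiplied by `b j` without recourse to `A`. -/
noncomputable def stepFun (A : L →ₗ[R] Module.End R (Multiset I →₀ R)) (i : I)
    (M : Multiset I) : Multiset I →₀ R :=
  match M.sort (· ≤ ·) with
  | [] => .single (i ::ₘ M) 1
  | j :: l =>
    if i ≤ j then .single (i ::ₘ M) 1
    else .single (i ::ₘ M) 1 + A (b j) (A (b i) (.single l 1) - .single (i ::ₘ l) 1)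
      + A ⁅b i, b j⁆ (.single l 1)

/-- The successive approximations to the action of `L` on `Multiset I →₀ R`; the `n`-th one is
correct on monomials of degree less than `n`. -/
noncomputable def approxAction : ℕ → L →ₗ[R] Module.End R (Multiset I →₀ R)
  | 0 => 0
  | n + 1 => b.constr R fun i => Finsupp.linearCombination R (stepFun b (approxAction n) i)

/-- The action of `L` on `Multiset I →₀ R`, the free module on the ordered monomials in a basis,
that corresponds to left multiplication in the enveloping algebra. -/
noncomputable def action : L →ₗ[R] Module.End R (Multiset I →₀ R) :=
  b.constr R fun i => Finsupp.linearCombination R fun M =>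
    approxAction b (M.card + 1) (b i) (.single M 1)

variable {b}

theorem approxAction_succ_of_le (n : ℕ) {i : I} {M : Multiset I} (h : ∀ j ∈ M, i ≤ j) :
    approxAction b (n + 1) (b i) (.single M 1) = .single (i ::ₘ M) 1 := by
  simp only [approxAction, Module.Basis.constr_basis, Finsupp.linearCombination_single, one_smul,
    stepFun]
  split
  · rfl
  · next j l hM => exact if_pos (h j (by rw [← Multiset.mem_sort (· ≤ ·), hM]; simp))

theorem approxAction_succ_of_lt (n : ℕ) {i j : I} {N : Multiset I} (hN : ∀ l ∈ N, j ≤ l)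
    (hji : j < i) : approxAction b (n + 1) (b i) (.single (j ::ₘ N) 1) =
      .single (i ::ₘ j ::ₘ N) 1
        + approxAction b n (b j) (approxAction b n (b i) (.single N 1) - .single (i ::ₘ N) 1)
        + approxAction b n ⁅b i, b j⁆ (.single N 1) := by
  simp [approxAction, stepFun, Multiset.sort_cons _ _ _ hN, not_le.2 hji]

theorem approxAction_sub_mem_degreeLE (n : ℕ) (i : I) {M : Multiset I} (hM : M.card < n) :
    approxAction b n (b i) (.single M 1) - .single (i ::ₘ M) 1 ∈ degreeLE R I M.card := by
  induction n generalizing i M with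
  | zero => omega
  | succ n ih =>
    by_cases hle : ∀ j ∈ M, i ≤ j
    · simp [approxAction_succ_of_le n hle]
    obtain ⟨j, N, rfl, hN, hji⟩ := exists_eq_cons_of_not_forall_le hle
    rw [Multiset.card_cons] at hM
    have hNn : N.card < n := by omega
    rw [approxAction_succ_of_lt n hN hji, add_assoc, add_sub_cancel_left, Multiset.card_cons]
    exact add_mem (apply_mem_degreeLE_succ (fun i _ => ih i) (b j) hNn (ih i hNn))
      (apply_mem_degreeLE_succ (fun i _ => ih i) ⁅b i, b j⁆ hNn (single_mem_degreeLE le_rfl))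

theorem approxAction_succ_eq (n : ℕ) (i : I) {M : Multiset I} (hM : M.card < n) :
    approxAction b (n + 1) (b i) (.single M 1) = approxAction b n (b i) (.single M 1) := by
  induction n generalizing i M with
  | zero => omega
  | succ n ih =>
    by_cases hle : ∀ j ∈ M, i ≤ j
    · rw [approxAction_succ_of_le _ hle, approxAction_succ_of_le _ hle]
    obtain ⟨j, N, rfl, hN, hji⟩ := exists_eq_cons_of_not_forall_le hle
    rw [Multiset.card_cons] at hM
    have hNn : N.card < n := by omega
    have heq (x : L) {v} (hv : v ∈ degreeLE R I N.card) :
        approxAction b (n + 1) x v = approxAction b n x v :=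
      apply_eq_apply_of_mem_degreeLE (fun i _ => ih i) x hNn hv
    rw [approxAction_succ_of_lt _ hN hji, approxAction_succ_of_lt _ hN hji, ih i hNn,
      heq (b j) (approxAction_sub_mem_degreeLE n i hNn),
      heq ⁅b i, b j⁆ (single_mem_degreeLE le_rfl)]

theorem action_eq_approxAction {n : ℕ} (i : I) {M : Multiset I} (hM : M.card < n) :
    action b (b i) (.single M 1) = approxAction b n (b i) (.single M 1) := by
  induction n, hM using Nat.le_induction with
  | base => simp [action]
  | succ n hn ih => rw [approxAction_succ_eq n i hn, ih]

theorem action_sub_mem_degreeLE (i : I) (M : Multiset I) :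
    action b (b i) (.single M 1) - .single (i ::ₘ M) 1 ∈ degreeLE R I M.card := by
  rw [action_eq_approxAction i M.card.lt_succ_self]
  exact approxAction_sub_mem_degreeLE _ i M.card.lt_succ_self

theorem action_of_le {i : I} {M : Multiset I} (h : ∀ j ∈ M, i ≤ j) :
    action b (b i) (.single M 1) = .single (i ::ₘ M) 1 := by
  rw [action_eq_approxAction i M.card.lt_succ_self, approxAction_succ_of_le _ h]

theorem action_of_lt {i j : I} {N : Multiset I} (hN : ∀ l ∈ N, j ≤ l) (hji : j < i) :
    action b (b i) (.single (j ::ₘ N) 1) =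
      action b (b j) (action b (b i) (.single N 1)) + action b ⁅b i, b j⁆ (.single N 1) := by
  have hlead : action b (b j) (.single (i ::ₘ N) 1) = .single (i ::ₘ j ::ₘ N) 1 := by
    rw [action_of_le (Multiset.forall_mem_cons.2 ⟨hji.le, hN⟩), Multiset.cons_swap]
  have heq (x : L) {v} (hv : v ∈ degreeLE R I N.card) :
      action b x v = approxAction b (N.card + 1) x v :=
    apply_eq_apply_of_mem_degreeLE (fun i _ => action_eq_approxAction i) x N.card.lt_succ_self hv
  rw [action_eq_approxAction (n := N.card + 2) i (by simp), approxAction_succ_of_lt _ hN hji,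
    ← action_eq_approxAction i N.card.lt_succ_self, ← heq (b j) (action_sub_mem_degreeLE i N),
    ← heq ⁅b i, b j⁆ (single_mem_degreeLE le_rfl), map_sub, hlead]
  abel

end Action

section BracketLocus

-- At lower priority these let the algebra structure of an associative algebra, rather than its
-- commutator Lie algebra structure, supply its module structure.
attribute [local instance 100] LieRing.ofAssociativeRing LieAlgebra.toModule

variable {R L V : Type*} [CommRing R] [LieRing L] [LieAlgebra R L] [AddCommGroup V] [Module R V]

/-- The vectors on which the operators attached by `A` to `x`, `y` and `⁅x, y⁆` satisfy the
relation defining a representation. -/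
def bracketLocus (A : L →ₗ[R] Module.End R V) (x y : L) : Submodule R V :=
  LinearMap.eqLocus (A ⁅x, y⁆) (A x * A y - A y * A x)

variable {A : L →ₗ[R] Module.End R V} {v : V}

theorem mem_bracketLocus {x y : L} :
    v ∈ bracketLocus A x y ↔ A ⁅x, y⁆ v = A x (A y v) - A y (A x v) :=
  Iff.rfl

theorem mem_bracketLocus_of_basis {I : Type*} [LinearOrder I] (b : Module.Basis I R L)
    (h : ∀ i j, j < i → v ∈ bracketLocus A (b i) (b j)) (x y : L) : v ∈ bracketLocus A x y := by
  have hbasis (i j : I) : v ∈ bracketLocus A (b i) (b j) := by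
    rcases lt_trichotomy i j with hij | rfl | hji
    · have := mem_bracketLocus.1 (h j i hij)
      rw [mem_bracketLocus, ← lie_skew, map_neg, LinearMap.neg_apply, this, neg_sub]
    · simp [mem_bracketLocus]
    · exact h i j hji
  have hbilin : (LieModule.toEnd R L L).toLinearMap.compr₂ (A.flip v) =
      A.compl₂ (A.flip v) - (A.compl₂ (A.flip v)).flip := LinearMap.ext_basis b b hbasis
  exact LinearMap.congr_fun₂ hbilin x y

-- The Jacobi identity carries the bracket relation from `v` to `A z v`.
theorem apply_mem_bracketLocus {x y z : L} (h : ∀ x y, v ∈ bracketLocus A x y)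
    (hy : A y v ∈ bracketLocus A x z) (hx : A x v ∈ bracketLocus A y z) :
    A z v ∈ bracketLocus A x y := by
  have hAz (w : L) : A w (A z v) = A z (A w v) + A ⁅w, z⁆ v := by
    rw [mem_bracketLocus.1 (h w z)]; abel
  have hcomm (u w : L) (hw : A w v ∈ bracketLocus A u z) : A u (A w (A z v)) =
      A z (A u (A w v)) + A ⁅u, z⁆ (A w v) + A ⁅w, z⁆ (A u v) + A ⁅u, ⁅w, z⁆⁆ v := by
    rw [hAz w, map_add, mem_bracketLocus.1 (h u ⁅w, z⁆), mem_bracketLocus.1 hw]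
    abel
  rw [mem_bracketLocus, hAz, hcomm x y hy, hcomm y x hx, mem_bracketLocus.1 (h x y), lie_lie,
    map_sub, map_sub, LinearMap.sub_apply]
  abel

end BracketLocus

section Representation

variable {R L I : Type*} [CommRing R] [LieRing L] [LieAlgebra R L] [LinearOrder I]
  {b : Module.Basis I R L}

theorem action_single_mem_bracketLocus_of_min {k i j : I} {P : Multiset I} (hP : ∀ l ∈ P, k ≤ l)
    (hki : k < i) (hkj : k < j)
    (h : ∀ x y, degreeLE R I P.card ≤ bracketLocus (action b) x y) :
    action b (b j) (.single P 1) ∈ bracketLocus (action b) (b i) (b k) := by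
  have hmin : ∀ l ∈ j ::ₘ P, k ≤ l := Multiset.forall_mem_cons.2 ⟨hkj.le, hP⟩
  have hlead : .single (j ::ₘ P) 1 ∈ bracketLocus (action b) (b i) (b k) := by
    rw [mem_bracketLocus, action_of_le hmin, action_of_lt hmin hki, add_sub_cancel_left]
  rw [← sub_add_cancel (action b (b j) (.single P 1)) (.single (j ::ₘ P) 1)]
  exact add_mem (h _ _ (action_sub_mem_degreeLE j P)) hlead

theorem degreeLE_le_bracketLocus_action (n : ℕ) (x y : L) :
    degreeLE R I n ≤ bracketLocus (action b) x y := by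
  induction n using Nat.strong_induction_on generalizing x y with
  | _ n ih =>
  refine Submodule.span_le.2 ?_
  rintro _ ⟨M, ⟨-, hM⟩, rfl⟩
  refine mem_bracketLocus_of_basis b (fun i j hji => ?_) x y
  by_cases hle : ∀ l ∈ M, j ≤ l
  · rw [mem_bracketLocus, action_of_le hle, action_of_lt hle hji, add_sub_cancel_left]
  obtain ⟨k, P, rfl, hP, hkj⟩ := exists_eq_cons_of_not_forall_le hle
  have hPn : P.card < n := by rw [Multiset.card_cons] at hM; omega
  beta_reduce
  rw [← action_of_le (b := b) hP]
  exact apply_mem_bracketLocus (fun x y => ih _ hPn x y (single_mem_degreeLE le_rfl))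
    (action_single_mem_bracketLocus_of_min hP (hkj.trans hji) hkj (ih _ hPn))
    (action_single_mem_bracketLocus_of_min hP hkj (hkj.trans hji) (ih _ hPn))

theorem action_lie (b : Module.Basis I R L) (x y : L) :
    action b ⁅x, y⁆ = action b x * action b y - action b y * action b x :=
  Finsupp.lhom_ext' fun M => LinearMap.ext_ring <|
    degreeLE_le_bracketLocus_action M.card x y (single_mem_degreeLE le_rfl)

end Representation

section OrderedMonomial

open UniversalEnvelopingAlgebra

attribute [local instance 100] LieRing.ofAssociativeRing LieAlgebra.toModule

variable {R L I : Type*} [CommRing R] [LieRing L] [LieAlgebra R L] [LinearOrder I]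

/-- The product of the letters of `M` in increasing order, in the enveloping algebra. -/
noncomputable def orderedMonomial (R : Type*) {L I : Type*} [CommRing R] [LieRing L]
    [LieAlgebra R L] [LinearOrder I] (b : I → L) (M : Multiset I) :
    UniversalEnvelopingAlgebra R L :=
  ((M.sort (· ≤ ·)).map fun i => ι R (b i)).prod

section Family

variable {b : I → L}

theorem orderedMonomial_zero : orderedMonomial R b 0 = 1 := by
  simp [orderedMonomial]

theorem orderedMonomial_cons {i : I} {M : Multiset I} (h : ∀ j ∈ M, i ≤ j) :
    orderedMonomial R b (i ::ₘ M) = ι R (b i) * orderedMonomial R b M := by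
  simp only [orderedMonomial, Multiset.sort_cons _ _ _ h, List.map_cons, List.prod_cons]

theorem ι_mul_orderedMonomial_cons_sub {i j : I} {N : Multiset I} (hN : ∀ l ∈ N, j ≤ l)
    (hji : j < i) :
    ι R (b i) * orderedMonomial R b (j ::ₘ N) - orderedMonomial R b (i ::ₘ j ::ₘ N) =
      ι R (b j) * (ι R (b i) * orderedMonomial R b N - orderedMonomial R b (i ::ₘ N)) +
        ι R ⁅b i, b j⁆ * orderedMonomial R b N := by
  have hswap : ι R (b i) * ι R (b j) = ι R (b j) * ι R (b i) + ι R ⁅b i, b j⁆ := by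
    rw [LieHom.map_lie, LieRing.of_associative_ring_bracket]; abel
  have hlead : orderedMonomial R b (i ::ₘ j ::ₘ N) =
      ι R (b j) * orderedMonomial R b (i ::ₘ N) := by
    rw [Multiset.cons_swap, orderedMonomial_cons (Multiset.forall_mem_cons.2 ⟨hji.le, hN⟩)]
  rw [hlead, orderedMonomial_cons hN, ← mul_assoc, hswap]
  noncomm_ring

theorem orderedMonomial_add {M N : Multiset I} (h : ∀ i ∈ M, ∀ j ∈ N, i ≤ j) :
    orderedMonomial R b (M + N) = orderedMonomial R b M * orderedMonomial R b N := by
  induction M using multiset_induction_on_min with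
  | zero => rw [zero_add, orderedMonomial_zero, one_mul]
  | cons i M hi ih =>
    rw [Multiset.forall_mem_cons] at h
    have hiMN : ∀ j ∈ M + N, i ≤ j := fun j hj => (Multiset.mem_add.1 hj).elim (hi j) (h.1 j)
    rw [Multiset.cons_add, orderedMonomial_cons hiMN, orderedMonomial_cons hi, ih h.2, mul_assoc]

variable (R b) in
/-- The span of the ordered monomials with all letters in `S`. -/
noncomputable def monomialSpan (S : Set I) : Submodule R (UniversalEnvelopingAlgebra R L) :=
  Submodule.span R (orderedMonomial R b '' {M | ∀ i ∈ M, i ∈ S})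

theorem orderedMonomial_mem_monomialSpan {S : Set I} {M : Multiset I} (hM : ∀ i ∈ M, i ∈ S) :
    orderedMonomial R b M ∈ monomialSpan R b S :=
  Submodule.subset_span ⟨M, hM, rfl⟩

variable {S : Set I} {h : LieSubalgebra R L}

theorem ι_mul_orderedMonomial_sub_mem (hS : Submodule.span R (b '' S) = h.toSubmodule)
    {i : I} (hi : i ∈ S) {M : Multiset I} (hM : ∀ j ∈ M, j ∈ S) :
    ι R (b i) * orderedMonomial R b M - orderedMonomial R b (i ::ₘ M) ∈
      degreeSpan R (orderedMonomial R b) S M.card := by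
  induction hn : M.card using Nat.strong_induction_on generalizing i M with
  | _ n ih =>
  by_cases hle : ∀ j ∈ M, i ≤ j
  · simp [orderedMonomial_cons hle]
  obtain ⟨j, N, rfl, hN, hji⟩ := exists_eq_cons_of_not_forall_le hle
  obtain ⟨hj, hNS⟩ := Multiset.forall_mem_cons.1 hM
  rw [Multiset.card_cons] at hn
  have hmul {x : L} (hx : x ∈ h.toSubmodule) {u}
      (hu : u ∈ degreeSpan R (orderedMonomial R b) S N.card) :
      ι R x * u ∈ degreeSpan R (orderedMonomial R b) S n := by
    rw [← hn]
    exact apply_mem_degreeSpan_succ (b := b) (A := (LinearMap.mul R _).comp (ι R).toLinearMap)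
      (fun i hi P hP hPn => ih _ hPn hi hP rfl) (hS ▸ hx) (by omega) hu
  have hmem {i} (hi : i ∈ S) : b i ∈ h.toSubmodule := hS ▸ Submodule.subset_span ⟨i, hi, rfl⟩
  rw [ι_mul_orderedMonomial_cons_sub hN hji]
  exact add_mem (hmul (hmem hj) (ih _ (by omega) hi hNS rfl))
    (hmul (h.lie_mem (hmem hi) (hmem hj)) (mem_degreeSpan _ hNS))

theorem ι_mul_mem_monomialSpan (hS : Submodule.span R (b '' S) = h.toSubmodule)
    {x : L} (hx : x ∈ h.toSubmodule) {u : UniversalEnvelopingAlgebra R L}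
    (hu : u ∈ monomialSpan R b S) : ι R x * u ∈ monomialSpan R b S := by
  suffices monomialSpan R b S ≤ (monomialSpan R b S).comap (LinearMap.mulLeft R (ι R x)) from
    this hu
  refine Submodule.span_le.2 ?_
  rintro _ ⟨M, hM, rfl⟩
  have hdeg := apply_mem_degreeSpan_succ (b := b) (A := (LinearMap.mul R _).comp (ι R).toLinearMap)
    (fun i hi P hP _ => ι_mul_orderedMonomial_sub_mem hS hi hP) (hS ▸ hx)
    M.card.lt_succ_self (mem_degreeSpan (orderedMonomial R b) hM)
  exact Submodule.span_mono (Set.image_mono fun _ hN => hN.1) hdeg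

theorem toSubmodule_adjoin_ι_image (hS : Submodule.span R (b '' S) = h.toSubmodule) :
    Subalgebra.toSubmodule (Algebra.adjoin R (ι R '' (h : Set L))) = monomialSpan R b S := by
  apply le_antisymm
  · rw [Algebra.adjoin_eq_span]
    refine Submodule.span_le.2 fun u hu => ?_
    induction hu using Submonoid.closure_induction_left with
    | one =>
      rw [← orderedMonomial_zero (R := R) (b := b)]
      exact orderedMonomial_mem_monomialSpan (by simp)
    | mul_left x hx u _ ih =>
      obtain ⟨x, hx, rfl⟩ := hx
      exact ι_mul_mem_monomialSpan hS hx ih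
  · refine Submodule.span_le.2 ?_
    rintro _ ⟨M, hM, rfl⟩
    refine Subalgebra.list_prod_mem _ fun u hu => ?_
    obtain ⟨i, hi, rfl⟩ := List.mem_map.1 hu
    have hb : b i ∈ h.toSubmodule :=
      hS ▸ Submodule.subset_span ⟨i, hM i ((Multiset.mem_sort _).1 hi), rfl⟩
    exact Algebra.subset_adjoin ⟨b i, hb, rfl⟩

end Family

theorem adjoin_range_ι : Algebra.adjoin R (Set.range (ι R (L := L))) = ⊤ := by
  let incl : L →ₗ⁅R⁆ Algebra.adjoin R (Set.range (ι R (L := L))) :=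
    { toFun x := ⟨ι R x, Algebra.subset_adjoin ⟨x, rfl⟩⟩
      map_add' x y := Subtype.ext (map_add (ι R) x y)
      map_smul' c x := Subtype.ext (map_smul (ι R) c x)
      map_lie' {x y} := Subtype.ext (LieHom.map_lie (ι R) x y) }
  have hid : (Subalgebra.val _).comp (lift R incl) = AlgHom.id R _ := by
    ext x
    simp [incl]
  rw [eq_top_iff]
  rintro u -
  rw [← AlgHom.id_apply (R := R) u, ← hid]
  exact (lift R incl u).2

variable (b : Module.Basis I R L)

theorem monomialSpan_univ : monomialSpan R b Set.univ = ⊤ := by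
  have htop : Submodule.span R (b '' Set.univ) = (⊤ : LieSubalgebra R L).toSubmodule := by
    rw [Set.image_univ, b.span_eq, LieSubalgebra.top_toSubmodule]
  rw [← toSubmodule_adjoin_ι_image htop, LieSubalgebra.top_coe, Set.image_univ, adjoin_range_ι,
    Algebra.top_toSubmodule]

/-- The representation of the enveloping algebra on the free module on the ordered monomials. -/
noncomputable def representation :
    UniversalEnvelopingAlgebra R L →ₐ[R] Module.End R (Multiset I →₀ R) :=
  lift R { action b with map_lie' := fun {x y} => action_lie b x y }

theorem representation_ι (x : L) : representation b (ι R x) = action b x :=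
  lift_ι_apply R _ x

theorem representation_orderedMonomial_single_zero (M : Multiset I) :
    representation b (orderedMonomial R b M) (.single 0 1) = .single M 1 := by
  induction M using multiset_induction_on_min with
  | zero => rw [orderedMonomial_zero, map_one, Module.End.one_apply]
  | cons i M hi ih =>
    rw [orderedMonomial_cons hi, map_mul, Module.End.mul_apply, ih, representation_ι,
      action_of_le hi]

theorem linearIndependent_orderedMonomial : LinearIndependent R (orderedMonomial R b) := by
  let f := LinearMap.applyₗ (.single (0 : Multiset I) (1 : R)) ∘ₗ (representation b).toLinearMap
  have hf : f ∘ orderedMonomial R b = fun M => .single M 1 :=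
    funext (representation_orderedMonomial_single_zero b)
  refine LinearIndependent.of_comp f ?_
  rw [hf]
  exact Finsupp.linearIndependent_single_one R (Multiset I)

end OrderedMonomial

section Bialgebra

open UniversalEnvelopingAlgebra

attribute [local instance 100] LieRing.ofAssociativeRing LieAlgebra.toModule

variable {R L I : Type*} [CommRing R] [LieRing L] [LieAlgebra R L]

theorem enveloping_algHom_ext {A : Type*} [Ring A] [Algebra R A]
    {f f' : UniversalEnvelopingAlgebra R L →ₐ[R] A} (h : ∀ x, f (ι R x) = f' (ι R x)) : f = f' :=
  hom_ext R (LieHom.ext h)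

/-- The comultiplication of the enveloping algebra, determined by the elements of `L` being
primitive. -/
noncomputable def envelopingComul : UniversalEnvelopingAlgebra R L →ₐ[R]
    UniversalEnvelopingAlgebra R L ⊗[R] UniversalEnvelopingAlgebra R L :=
  lift R
    { (TensorProduct.mk R _ _).flip 1 ∘ₗ (ι R).toLinearMap +
        TensorProduct.mk R _ _ 1 ∘ₗ (ι R).toLinearMap with
      map_lie' := fun {x y} => by
        simp [LieHom.map_lie, LieRing.of_associative_ring_bracket, TensorProduct.tmul_sub,
          add_mul, mul_add]
        abel }

theorem envelopingComul_ι (x : L) : envelopingComul (ι R x) = ι R x ⊗ₜ 1 + 1 ⊗ₜ ι R x :=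
  lift_ι_apply R _ x

/-- The standard bialgebra structure of the enveloping algebra. -/
noncomputable instance envelopingBialgebra : Bialgebra R (UniversalEnvelopingAlgebra R L) :=
  .ofAlgHom envelopingComul (lift R 0)
    (enveloping_algHom_ext fun x => by
      simp [-ι_apply, envelopingComul_ι, TensorProduct.add_tmul, TensorProduct.tmul_add,
        Algebra.TensorProduct.one_def, add_assoc])
    (enveloping_algHom_ext fun x => by simp [-ι_apply, envelopingComul_ι, lift_ι_apply])
    (enveloping_algHom_ext fun x => by simp [-ι_apply, envelopingComul_ι, lift_ι_apply])

theorem comul_ι (x : L) : Coalgebra.comul (R := R) (ι R x) = ι R x ⊗ₜ 1 + 1 ⊗ₜ ι R x :=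
  envelopingComul_ι x

theorem counit_ι (x : L) : Coalgebra.counit (R := R) (ι R x) = 0 :=
  lift_ι_apply R 0 x

variable [LinearOrder I] {b : I → L}

theorem comul_orderedMonomial (M : Multiset I) :
    Coalgebra.comul (R := R) (orderedMonomial R b M) =
      (M.antidiagonal.map fun p => orderedMonomial R b p.1 ⊗ₜ orderedMonomial R b p.2).sum := by
  induction M using multiset_induction_on_min with
  | zero => simp [orderedMonomial_zero, Algebra.TensorProduct.one_def]
  | cons i M hi ih =>
    rw [orderedMonomial_cons hi, Bialgebra.comul_mul, comul_ι, ih, Multiset.antidiagonal_cons,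
      Multiset.map_add, Multiset.sum_add, Multiset.map_map, Multiset.map_map, add_mul, add_comm,
      ← Multiset.sum_map_mul_left, ← Multiset.sum_map_mul_left]
    have hle {p} (hp : p ∈ M.antidiagonal) : p.1 ≤ M ∧ p.2 ≤ M := by
      rw [← Multiset.mem_antidiagonal.1 hp]
      exact ⟨Multiset.le_add_right _ _, Multiset.le_add_left _ _⟩
    congr 2
    · refine Multiset.map_congr rfl fun p hp => ?_
      simp [orderedMonomial_cons fun j hj => hi j (Multiset.mem_of_le (hle hp).2 hj)]
    · refine Multiset.map_congr rfl fun p hp => ?_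
      simp [orderedMonomial_cons fun j hj => hi j (Multiset.mem_of_le (hle hp).1 hj)]

theorem comul_mem_range_of_mem_monomialSpan {S : Set I} {u : UniversalEnvelopingAlgebra R L}
    (hu : u ∈ monomialSpan R b S) : Coalgebra.comul (R := R) u ∈
      LinearMap.range (TensorProduct.map (monomialSpan R b S).subtype
        (monomialSpan R b S).subtype) := by
  suffices monomialSpan R b S ≤ (LinearMap.range (TensorProduct.map (monomialSpan R b S).subtype
      (monomialSpan R b S).subtype)).comap Coalgebra.comul from this hu
  refine Submodule.span_le.2 ?_
  rintro _ ⟨M, hM, rfl⟩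
  rw [SetLike.mem_coe, Submodule.mem_comap, comul_orderedMonomial]
  refine multiset_sum_mem _ fun t ht => ?_
  obtain ⟨p, hp, rfl⟩ := Multiset.mem_map.1 ht
  have hmem {i} (hi : i ∈ p.1 + p.2) : i ∈ S := hM i (Multiset.mem_antidiagonal.1 hp ▸ hi)
  exact ⟨⟨_, orderedMonomial_mem_monomialSpan fun i hi => hmem (Multiset.mem_add.2 (.inl hi))⟩ ⊗ₜ
    ⟨_, orderedMonomial_mem_monomialSpan fun i hi => hmem (Multiset.mem_add.2 (.inr hi))⟩, rfl⟩

end Bialgebra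

section Splitting

variable {R L I : Type*} [CommRing R] [LieRing L] [LieAlgebra R L] [LinearOrder I] {S T : Set I}

theorem monomialSpan_mul_monomialSpan {b : I → L} (hST : ∀ i ∈ S, ∀ j ∈ T, i ≤ j) :
    monomialSpan R b S * monomialSpan R b T = monomialSpan R b (S ∪ T) := by
  classical
  rw [monomialSpan, monomialSpan, Submodule.span_mul_span, monomialSpan]
  congr 1
  apply Set.Subset.antisymm
  · rintro _ ⟨_, ⟨M, hM, rfl⟩, _, ⟨N, hN, rfl⟩, rfl⟩
    refine ⟨M + N, fun i hi => (Multiset.mem_add.1 hi).imp (hM i) (hN i), ?_⟩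
    exact orderedMonomial_add fun i hi j hj => hST i (hM i hi) j (hN j hj)
  · rintro _ ⟨M, hM, rfl⟩
    have hS {i} (hi : i ∈ M.filter (· ∈ S)) : i ∈ S := Multiset.of_mem_filter hi
    have hT {i} (hi : i ∈ M.filter (· ∉ S)) : i ∈ T :=
      (hM i (Multiset.mem_of_mem_filter hi)).resolve_left (Multiset.mem_filter.1 hi).2
    rw [← Multiset.filter_add_not (· ∈ S) M,
      orderedMonomial_add fun i hi j hj => hST i (hS hi) j (hT hj)]
    exact Set.mul_mem_mul ⟨_, fun _ => hS, rfl⟩ ⟨_, fun _ => hT, rfl⟩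

theorem linearDisjoint_monomialSpan (b : Module.Basis I R L) (hST : ∀ i ∈ S, ∀ j ∈ T, i ≤ j)
    (hdisj : Disjoint S T) : (monomialSpan R b S).LinearDisjoint (monomialSpan R b T) := by
  have hli := linearIndependent_orderedMonomial b
  rw [monomialSpan, monomialSpan, Set.image_eq_range, Set.image_eq_range]
  refine .of_basis_mul _ _ (Module.Basis.span (hli.comp _ Subtype.val_injective))
    (Module.Basis.span (hli.comp _ Subtype.val_injective)) ?_
  have hprod := hli.comp _ (multiset_add_injective_of_disjoint hdisj)
  convert hprod using 2 with p
  rw [Module.Basis.span_apply, Module.Basis.span_apply]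
  exact (orderedMonomial_add fun i hi j hj => hST i (p.1.2 i hi) j (p.2.2 j hj)).symm

theorem bijective_mulMap_monomialSpan (b : Module.Basis I R L) (hST : ∀ i ∈ S, ∀ j ∈ T, i ≤ j)
    (hcompl : IsCompl S T) :
    Function.Bijective (Submodule.mulMap (monomialSpan R b S) (monomialSpan R b T)) := by
  refine ⟨(linearDisjoint_monomialSpan b hST hcompl.disjoint).injective, ?_⟩
  rw [← LinearMap.range_eq_top, Submodule.mulMap_range, monomialSpan_mul_monomialSpan hST,
    show S ∪ T = Set.univ from hcompl.sup_eq_top, monomialSpan_univ]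

end Splitting

section AugmentationQuotient

variable {R A : Type*} [CommRing R] [Ring A] [Algebra R A]

/-- The left ideal `A H⁺` generated by `H⁺ = H ∩ ker ε`, as a submodule. -/
def augmentationLeftIdeal (ε : A →ₐ[R] R) (H : Subalgebra R A) : Submodule R A :=
  Submodule.span R {z | ∃ u v : A, v ∈ H ∧ ε v = 0 ∧ z = u * v}

variable {ε : A →ₐ[R] R} {H : Subalgebra R A} {C : Submodule R A}

theorem exists_apply_mul_eq_smul
    (hC : Function.Bijective (C.mulMap (Subalgebra.toSubmodule H))) :
    ∃ p : A →ₗ[R] C, ∀ (c : C) (v : H), p (c * v) = ε v • c := by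
  let e : C ⊗[R] H ≃ₗ[R] A := .ofBijective _ hC
  have he (c : C) (v : H) : e (c ⊗ₜ v) = c * v := rfl
  refine ⟨(TensorProduct.rid R C).toLinearMap ∘ₗ
    (ε.toLinearMap ∘ₗ H.val.toLinearMap).lTensor C ∘ₗ e.symm.toLinearMap, fun c v => ?_⟩
  simp [← he]

theorem ker_eq_augmentationLeftIdeal (hCH : C * Subalgebra.toSubmodule H = ⊤) {p : A →ₗ[R] C}
    (hp : ∀ (c : C) (v : H), p (c * v) = ε v • c) :
    LinearMap.ker p = augmentationLeftIdeal ε H := by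
  apply le_antisymm
  · suffices ∀ x, x - p x ∈ augmentationLeftIdeal ε H by
      intro x hx
      simpa [LinearMap.mem_ker.1 hx] using this x
    intro x
    induction hCH ▸ Submodule.mem_top (x := x) using Submodule.mul_induction_on' with
    | mem_mul_mem c hc v hv =>
      refine Submodule.subset_span ⟨c, v - algebraMap R A (ε v),
        sub_mem hv (H.algebraMap_mem _), by simp, ?_⟩
      rw [hp ⟨c, hc⟩ ⟨v, hv⟩, mul_sub, ← Algebra.commutes, ← Algebra.smul_def,
        Submodule.coe_smul]
    | add x _ y _ hx hy =>
      rw [map_add, Submodule.coe_add, add_sub_add_comm]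
      exact add_mem hx hy
  · refine Submodule.span_le.2 ?_
    rintro _ ⟨u, v, hv, hεv, rfl⟩
    rw [SetLike.mem_coe, LinearMap.mem_ker]
    induction hCH ▸ Submodule.mem_top (x := u) using Submodule.mul_induction_on' with
    | mem_mul_mem c hc w hw =>
      rw [mul_assoc]
      simpa [hεv] using hp ⟨c, hc⟩ ⟨w * v, mul_mem hw hv⟩
    | add x _ y _ hx hy => rw [add_mul, map_add, hx, hy, add_zero]

theorem isCompl_augmentationLeftIdeal
    (hC : Function.Bijective (C.mulMap (Subalgebra.toSubmodule H))) :
    IsCompl (augmentationLeftIdeal ε H) C := by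
  obtain ⟨p, hp⟩ := exists_apply_mul_eq_smul (ε := ε) hC
  have hCH : C * Subalgebra.toSubmodule H = ⊤ := by
    rw [← Submodule.mulMap_range, LinearMap.range_eq_top.2 hC.surjective]
  rw [← ker_eq_augmentationLeftIdeal hCH hp]
  exact (LinearMap.isCompl_of_proj fun c => by simpa using hp c 1).symm

end AugmentationQuotient

section Complement

open Coalgebra

variable {R M : Type*} [CommRing R] [AddCommGroup M] [Module R M] {J C : Submodule R M}

/-- The linear section of the quotient map `M → M ⧸ J` with values in a complement of `J`. -/
noncomputable def complementSection (hJC : IsCompl J C) : M ⧸ J →ₗ[R] M :=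
  C.subtype ∘ₗ (J.quotientEquivOfIsCompl C hJC).toLinearMap

theorem mkQ_complementSection (hJC : IsCompl J C) (t : M ⧸ J) :
    J.mkQ (complementSection hJC t) = t :=
  J.mk_quotientEquivOfIsCompl_apply hJC t

theorem complementSection_mkQ (hJC : IsCompl J C) (c : C) :
    complementSection hJC (J.mkQ c) = c :=
  congrArg C.subtype (J.quotientEquivOfIsCompl_apply_mk_right hJC c)

/-- `complementSection` as a coalgebra morphism, for a complement of a coideal that is closed
under comultiplication. -/
noncomputable def complementSectionCoalgHom [Coalgebra R M] [J.IsCoideal] (hJC : IsCompl J C)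
    (hC : ∀ c ∈ C, comul (R := R) c ∈ LinearMap.range (TensorProduct.map C.subtype C.subtype)) :
    M ⧸ J →ₗc[R] M where
  toLinearMap := complementSection hJC
  counit_comp := by
    refine LinearMap.ext fun t => ?_
    conv_rhs => rw [← mkQ_complementSection hJC t]
    rfl
  map_comp_comul := by
    refine LinearMap.ext fun t => ?_
    obtain ⟨w, hw⟩ := hC _ (J.quotientEquivOfIsCompl C hJC t).2
    have hcomul : comul t = TensorProduct.map J.mkQ J.mkQ (comul (complementSection hJC t)) := by
      conv_lhs => rw [← mkQ_complementSection hJC t]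
      rfl
    have hid : (complementSection hJC ∘ₗ J.mkQ) ∘ₗ C.subtype = C.subtype :=
      LinearMap.ext (complementSection_mkQ hJC)
    have hfix : TensorProduct.map (complementSection hJC) (complementSection hJC)
        (TensorProduct.map J.mkQ J.mkQ (TensorProduct.map C.subtype C.subtype w)) =
        TensorProduct.map C.subtype C.subtype w := by
      rw [← LinearMap.comp_apply, ← LinearMap.comp_apply, ← TensorProduct.map_comp,
        ← TensorProduct.map_comp, hid]
    rw [LinearMap.comp_apply, LinearMap.comp_apply, hcomul]
    exact hw ▸ hfix

theorem isCoideal_of_comp_mkQ [CoalgebraStruct R M] {Δ : M ⧸ J →ₗ[R] (M ⧸ J) ⊗[R] (M ⧸ J)}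
    (hΔ : Δ ∘ₗ J.mkQ = TensorProduct.map J.mkQ J.mkQ ∘ₗ comul) {ε : M ⧸ J →ₗ[R] R}
    (hε : ε ∘ₗ J.mkQ = counit) : J.IsCoideal where
  counit_eq_zero x hx := by
    rw [← hε, LinearMap.comp_apply, J.mkQ_apply, (Submodule.Quotient.mk_eq_zero J).2 hx, map_zero]
  map_mkQ_comul_eq_zero x hx := by
    rw [← LinearMap.comp_apply, ← hΔ, LinearMap.comp_apply, J.mkQ_apply,
      (Submodule.Quotient.mk_eq_zero J).2 hx, map_zero]

end Complement

section Retract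

open Coalgebra

variable {R Q A : Type*} [CommSemiring R] [AddCommMonoid Q] [Module R Q] [AddCommMonoid A]
  [Module R A] [Coalgebra R A]

theorem coassoc_of_retract {f : Q →ₗ[R] A} {r : A →ₗ[R] Q} (hr : r ∘ₗ f = .id)
    {Δ : Q →ₗ[R] Q ⊗[R] Q} (hΔ : TensorProduct.map f f ∘ₗ Δ = comul ∘ₗ f) :
    (TensorProduct.assoc R Q Q Q).toLinearMap ∘ₗ Δ.rTensor Q ∘ₗ Δ = Δ.lTensor Q ∘ₗ Δ := by
  have hinj : Function.LeftInverse (map r (map r r)) (map f (map f f)) := by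
    intro x
    rw [← LinearMap.comp_apply, ← TensorProduct.map_comp, ← TensorProduct.map_comp, hr,
      TensorProduct.map_id, TensorProduct.map_id, LinearMap.id_apply]
  apply (LinearMap.cancel_left hinj.injective).1
  have hleft : map (map f f) f ∘ₗ Δ.rTensor Q = comul.rTensor A ∘ₗ map f f := by
    rw [LinearMap.map_comp_rTensor, hΔ, LinearMap.rTensor_comp_map]
  have hright : map f (map f f) ∘ₗ Δ.lTensor Q = comul.lTensor A ∘ₗ map f f := by
    rw [LinearMap.map_comp_lTensor, hΔ, LinearMap.lTensor_comp_map]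
  calc map f (map f f) ∘ₗ (TensorProduct.assoc R Q Q Q).toLinearMap ∘ₗ Δ.rTensor Q ∘ₗ Δ
      = ((TensorProduct.assoc R A A A).toLinearMap ∘ₗ comul.rTensor A ∘ₗ comul) ∘ₗ f := by
        rw [← LinearMap.comp_assoc, TensorProduct.map_map_comp_assoc_eq, LinearMap.comp_assoc,
          ← LinearMap.comp_assoc _ _ (map _ f), hleft, LinearMap.comp_assoc, hΔ]
        rfl
    _ = (comul.lTensor A ∘ₗ comul) ∘ₗ f := by rw [coassoc]
    _ = map f (map f f) ∘ₗ Δ.lTensor Q ∘ₗ Δ := by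
        rw [LinearMap.comp_assoc, ← hΔ, ← LinearMap.comp_assoc, ← hright, LinearMap.comp_assoc]

/-- The coalgebra structure on a retract `f : Q → A` of a coalgebra that is compatible with
the comultiplication `Δ` of `Q`. -/
abbrev coalgebraOfRetract {f : Q →ₗ[R] A} {r : A →ₗ[R] Q} (hr : r ∘ₗ f = .id)
    (Δ : Q →ₗ[R] Q ⊗[R] Q) (hΔ : TensorProduct.map f f ∘ₗ Δ = comul ∘ₗ f) : Coalgebra R Q where
  comul := Δ
  counit := counit ∘ₗ f
  coassoc := coassoc_of_retract hr hΔ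
  rTensor_counit_comp_comul := by
    have hinj : Function.LeftInverse (r.lTensor R) (f.lTensor R) := by
      intro x
      rw [← LinearMap.comp_apply, ← LinearMap.lTensor_comp, hr, LinearMap.lTensor_id_apply]
    apply (LinearMap.cancel_left hinj.injective).1
    calc f.lTensor R ∘ₗ (counit ∘ₗ f).rTensor Q ∘ₗ Δ
        = counit.rTensor A ∘ₗ map f f ∘ₗ Δ := by
          simp only [← LinearMap.comp_assoc, LinearMap.lTensor, LinearMap.rTensor,
            ← TensorProduct.map_comp]
          rfl
      _ = f.lTensor R ∘ₗ TensorProduct.mk R R Q 1 := by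
          rw [hΔ, ← LinearMap.comp_assoc, rTensor_counit_comp_comul]
          rfl
  lTensor_counit_comp_comul := by
    have hinj : Function.LeftInverse (r.rTensor R) (f.rTensor R) := by
      intro x
      rw [← LinearMap.comp_apply, ← LinearMap.rTensor_comp, hr, LinearMap.rTensor_id_apply]
    apply (LinearMap.cancel_left hinj.injective).1
    calc f.rTensor R ∘ₗ (counit ∘ₗ f).lTensor Q ∘ₗ Δ
        = counit.lTensor A ∘ₗ map f f ∘ₗ Δ := by
          simp only [← LinearMap.comp_assoc, LinearMap.lTensor, LinearMap.rTensor,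
            ← TensorProduct.map_comp]
          rfl
      _ = f.rTensor R ∘ₗ (TensorProduct.mk R Q R).flip 1 := by
          rw [hΔ, ← LinearMap.comp_assoc, lTensor_counit_comp_comul]
          rfl

end Retract

section TensorComponents

open Coalgebra

variable (R Q H : Type*) [CommSemiring R] [AddCommMonoid Q] [Module R Q] [Coalgebra R Q]
  [AddCommMonoid H] [Module R H] [Coalgebra R H]

/-- The projection `id ⊗ ε` of a tensor product of coalgebras to its first factor. -/
noncomputable def tensorFst : Q ⊗[R] H →ₗc[R] Q :=
  (Coalgebra.TensorProduct.rid R R Q).toCoalgHom.comp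
    (Coalgebra.TensorProduct.map (.id R Q) (counitCoalgHom R H))

/-- The projection `ε ⊗ id` of a tensor product of coalgebras to its second factor. -/
noncomputable def tensorSnd : Q ⊗[R] H →ₗc[R] H :=
  (Coalgebra.TensorProduct.lid R H).toCoalgHom.comp
    (Coalgebra.TensorProduct.map (counitCoalgHom R Q) (.id R H))

variable {R Q H}

theorem tensorFst_tmul (x : Q) (h : H) : tensorFst R Q H (x ⊗ₜ h) = counit (R := R) h • x := rfl

theorem tensorSnd_tmul (x : Q) (h : H) : tensorSnd R Q H (x ⊗ₜ h) = counit (R := R) x • h := rfl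

theorem map_tensorFst_tensorSnd_comul (z : Q ⊗[R] H) :
    TensorProduct.map (tensorFst R Q H).toLinearMap (tensorSnd R Q H).toLinearMap (comul z) =
      z := by
  induction z with
  | zero => simp only [map_zero]
  | add z w hz hw => simp only [map_add, hz, hw]
  | tmul x h =>
    have hcomp (X : Q ⊗[R] Q) (Y : H ⊗[R] H) :
        TensorProduct.map (tensorFst R Q H).toLinearMap (tensorSnd R Q H).toLinearMap
          (TensorProduct.AlgebraTensorModule.tensorTensorTensorComm R R R R Q Q H H (X ⊗ₜ Y)) =
        TensorProduct.rid R Q (counit.lTensor Q X) ⊗ₜ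
          TensorProduct.lid R H (counit.rTensor H Y) := by
      induction X with
      | zero => simp
      | add X X' hX hX' => simp only [map_add, TensorProduct.add_tmul, hX, hX']
      | tmul x x' =>
        induction Y with
        | zero => simp
        | add Y Y' hY hY' => simp only [map_add, TensorProduct.tmul_add, hY, hY']
        | tmul h h' =>
          simp [tensorFst_tmul, tensorSnd_tmul, TensorProduct.smul_tmul', TensorProduct.tmul_smul,
            smul_comm (counit (R := R) h)]
    rw [TensorProduct.comul_tmul, hcomp, lTensor_counit_comul, rTensor_counit_comul,
      TensorProduct.rid_tmul, TensorProduct.lid_tmul, one_smul, one_smul]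

variable {D : Type*} [AddCommMonoid D] [Module R D] [Coalgebra R D]

theorem map_tensorFst_comp_tensorSnd_comp_comul (f : D →ₗc[R] Q ⊗[R] H) (d : D) :
    TensorProduct.map ((tensorFst R Q H).comp f).toLinearMap
      ((tensorSnd R Q H).comp f).toLinearMap (comul d) = f d := by
  conv_rhs => rw [← map_tensorFst_tensorSnd_comul (f d), ← CoalgHomClass.map_comp_comul_apply]
  exact LinearMap.congr_fun (TensorProduct.map_comp _ _ _ _) _

theorem map_map_comul_comul {P : Type*} [AddCommMonoid P] [Module R P] (a : D →ₗc[R] Q)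
    (p : D →ₗ[R] P) (d : D) :
    TensorProduct.map a.toLinearMap (TensorProduct.map a.toLinearMap p ∘ₗ comul) (comul d) =
      TensorProduct.assoc R Q Q P
        (comul.rTensor P (TensorProduct.map a.toLinearMap p (comul d))) := by
  rw [← LinearMap.map_lTensor, ← coassoc_apply, TensorProduct.map_map_assoc,
    LinearMap.map_rTensor, ← LinearMap.comp_apply (LinearMap.rTensor _ _),
    LinearMap.rTensor_comp_map, a.map_comp_comul]

/-- The coalgebra morphism `x ⊗ y ↦ a x * b y` of two coalgebra morphisms into a bialgebra. -/
noncomputable def mulCoalgHomOfMap {A : Type*} [Semiring A] [Bialgebra R A] (a : Q →ₗc[R] A)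
    (b : H →ₗc[R] A) : Q ⊗[R] H →ₗc[R] A :=
  (Bialgebra.mulCoalgHom R A).comp (Coalgebra.TensorProduct.map a b)

end TensorComponents

section Factorization

variable {k} {Q H U : Type*} [AddCommGroup Q] [Module k Q] [Ring H] [Algebra k H] [Ring U]
  [Algebra k U]

theorem apply_cdcpMul_tmul_tmul {s : Q →ₗ[k] U} {j : H →ₗ[k] U} {Ψ : Q ⊗[k] H →ₗ[k] U}
    (hΨ : ∀ t v, Ψ (t ⊗ₜ v) = s t * j v) (hj : ∀ v w, j (v * w) = j v * j w)
    {dQ : Q →ₗ[k] Q ⊗[k] Q} {dH : H →ₗ[k] H ⊗[k] H}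
    {act : H ⊗[k] Q →ₗ[k] Q} {ps : H ⊗[k] Q →ₗ[k] H}
    {mM : Q ⊗[k] Q →ₗ[k] Q} {th : Q ⊗[k] Q →ₗ[k] H}
    (hμ : ∀ x y, Ψ (sweedlerPair k dQ dQ mM th (x ⊗ₜ y)) = s x * s y)
    {x x' : Q} {h h' : H} {z : Q ⊗[k] H}
    (hz : sweedlerPair k dH dQ act (sweedlerPair k dH dQ act ps) (h ⊗ₜ x') =
      TensorProduct.assoc k Q Q H (dQ.rTensor H z)) :
    Ψ (cdcpMul k Q H dQ dH act ps mM th (.mul' k H) ((x ⊗ₜ h) ⊗ₜ (x' ⊗ₜ h'))) =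
      s x * Ψ z * j h' := by
  simp only [cdcpMul, LinearMap.comp_apply, LinearEquiv.coe_coe, LinearMap.rTensor_tmul,
    LinearMap.lTensor_tmul, TensorProduct.assoc_tmul, TensorProduct.assoc_symm_tmul]
  rw [hz]
  clear hz
  induction z with
  | zero => simp
  | add z w hz hw =>
    simp only [map_add, TensorProduct.tmul_add, TensorProduct.add_tmul, mul_add, add_mul, hz, hw]
  | tmul y w =>
    have hexpand : s x * Ψ (y ⊗ₜ w) * j h' =
        Ψ (sweedlerPair k dQ dQ mM th (x ⊗ₜ y)) * j (w * h') := by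
      rw [hμ, hΨ, hj, mul_assoc, mul_assoc, mul_assoc]
    simp only [hexpand, sweedlerPair, LinearMap.comp_apply, LinearEquiv.coe_coe,
      TensorProduct.map_tmul, LinearMap.rTensor_tmul]
    induction dQ x with
    | zero => simp
    | add X X' hX hX' => simp only [map_add, TensorProduct.add_tmul, add_mul, hX, hX']
    | tmul a a' =>
      induction dQ y with
      | zero => simp
      | add Y Y' hY hY' =>
        simp only [map_add, TensorProduct.tmul_add, TensorProduct.add_tmul, add_mul, hY, hY']
      | tmul b b' => simp [hΨ, hj, mul_assoc]

end Factorization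

section CoalgebraFactorization

open Coalgebra

variable {k} {Q H U : Type*} [AddCommGroup Q] [Module k Q] [Coalgebra k Q] [Ring H] [Algebra k H]
  [Coalgebra k H] [Ring U] [Bialgebra k U]

theorem exists_cdcpMul_eq {s : Q →ₗc[k] U} {j : H →ₗc[k] U}
    {Ψ : (Q ⊗[k] H) ≃ₗc[k] U}
    (hΨ : ∀ t v, Ψ (t ⊗ₜ v) = s t * j v) (hj : ∀ v w, j (v * w) = j v * j w) :
    ∃ (act : H ⊗[k] Q →ₗ[k] Q) (ps : H ⊗[k] Q →ₗ[k] H) (mM : Q ⊗[k] Q →ₗ[k] Q)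
      (th : Q ⊗[k] Q →ₗ[k] H),
      Ψ.toLinearMap ∘ₗ cdcpMul k Q H comul comul act ps mM th (.mul' k H) =
        .mul' k U ∘ₗ TensorProduct.map Ψ.toLinearMap Ψ.toLinearMap := by
  let f := (Ψ.symm : U →ₗc[k] Q ⊗[k] H).comp (mulCoalgHomOfMap j s)
  let c := (Ψ.symm : U →ₗc[k] Q ⊗[k] H).comp (mulCoalgHomOfMap s s)
  have hf (h : H) (x : Q) : Ψ (f (h ⊗ₜ x)) = j h * s x := Ψ.apply_symm_apply _
  have hc (x y : Q) : Ψ (c (x ⊗ₜ y)) = s x * s y := Ψ.apply_symm_apply _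
  refine ⟨((tensorFst k Q H).comp f).toLinearMap, ((tensorSnd k Q H).comp f).toLinearMap,
    ((tensorFst k Q H).comp c).toLinearMap, ((tensorSnd k Q H).comp c).toLinearMap,
    TensorProduct.ext_fourfold' fun x h x' h' => ?_⟩
  have hcocycle (x y : Q) :
      Ψ (sweedlerPair k comul comul ((tensorFst k Q H).comp c).toLinearMap
        ((tensorSnd k Q H).comp c).toLinearMap (x ⊗ₜ y)) = s x * s y :=
    (congrArg Ψ (map_tensorFst_comp_tensorSnd_comp_comul c (x ⊗ₜ y))).trans (hc x y)
  have hsweedler := map_map_comul_comul ((tensorFst k Q H).comp f)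
    ((tensorSnd k Q H).comp f).toLinearMap (h ⊗ₜ x')
  rw [map_tensorFst_comp_tensorSnd_comp_comul] at hsweedler
  refine (apply_cdcpMul_tmul_tmul (Ψ := Ψ.toLinearMap) hΨ hj hcocycle hsweedler).trans ?_
  change s x * Ψ (f (h ⊗ₜ x')) * j h' = Ψ (x ⊗ₜ h) * Ψ (x' ⊗ₜ h')
  rw [hf, hΨ, hΨ, mul_assoc, mul_assoc, mul_assoc]

end CoalgebraFactorization

section MultiplicationIso

open Coalgebra

variable {R A : Type*} [CommRing R] [Ring A] [Bialgebra R A] {H : Subalgebra R A} [Coalgebra R H]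

theorem exists_coalgEquiv_tmul_eq_mul {C : Submodule R A} {J : Submodule R A} [J.IsCoideal]
    (hJ : J = augmentationLeftIdeal (Bialgebra.counitAlgHom R A) H)
    (hmul : Function.Bijective (C.mulMap (Subalgebra.toSubmodule H)))
    (hC : ∀ c ∈ C, comul (R := R) c ∈ LinearMap.range (TensorProduct.map C.subtype C.subtype))
    {j : H →ₗc[R] A} (hj : ∀ v, j v = v) :
    ∃ (s : A ⧸ J →ₗc[R] A) (Ψ : (A ⧸ J) ⊗[R] H ≃ₗc[R] A),
      (∀ t, J.mkQ (s t) = t) ∧ ∀ t v, Ψ (t ⊗ₜ v) = s t * j v := by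
  have hJC : IsCompl J C := hJ ▸ isCompl_augmentationLeftIdeal hmul
  let s := complementSectionCoalgHom hJC hC
  let e : (A ⧸ J) ⊗[R] H ≃ₗ[R] A :=
    TensorProduct.congr (J.quotientEquivOfIsCompl C hJC) (.refl R H) ≪≫ₗ .ofBijective _ hmul
  have he : (mulCoalgHomOfMap s j).toLinearMap = e.toLinearMap :=
    TensorProduct.ext' fun t v => congrArg (s t * ·) (hj v)
  have hbij : Function.Bijective (mulCoalgHomOfMap s j) :=
    (congrArg DFunLike.coe he).symm ▸ e.bijective
  exact ⟨s, .ofBijective hbij, mkQ_complementSection hJC, fun t v => rfl⟩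

end MultiplicationIso

theorem exists_adapted_basis.{u, v} {K : Type u} {V : Type v} [Field K] [AddCommGroup V]
    [Module K V] (W : Submodule K V) :
    ∃ (I : Type v) (_ : LinearOrder I) (b : Module.Basis I K V) (S : Set I),
      Submodule.span K (b '' S) = W ∧ ∀ i ∈ Sᶜ, ∀ j ∈ S, i ≤ j := by
  obtain ⟨W', hW⟩ := exists_isCompl W
  let bW := Module.Basis.ofVectorSpace K W
  let bW' := Module.Basis.ofVectorSpace K W'
  obtain ⟨_, -⟩ := exists_wellFoundedLT (Module.Basis.ofVectorSpaceIndex K W)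
  obtain ⟨_, -⟩ := exists_wellFoundedLT (Module.Basis.ofVectorSpaceIndex K W')
  let b := ((bW'.prod bW).map (W'.prodEquivOfIsCompl W hW.symm)).reindex toLex
  have hb (i) : b (toLex (.inr i)) = bW i := by simp [b]
  refine ⟨_, inferInstance, b, Set.range (toLex ∘ Sum.inr), ?_, fun i hi j hj => ?_⟩
  · rw [← Set.range_comp, show b ∘ toLex ∘ Sum.inr = W.subtype ∘ bW from funext hb, Set.range_comp,
      ← Submodule.map_span, bW.span_eq, Submodule.map_subtype_top]
  · obtain ⟨j, rfl⟩ := hj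
    rcases h : ofLex i with i' | i'
    · rw [← toLex_ofLex i, h]
      exact (Sum.Lex.inl_lt_inr i' j).le
    · exact absurd ⟨i', congrArg toLex h.symm⟩ hi

end PBW

theorem enveloping_algebra_cocycle_double_cross_product_general
    (g : Type*) [LieRing g] [LieAlgebra k g]
    (h : LieSubalgebra k g)
    (εU : UniversalEnvelopingAlgebra k g →ₐ[k] k)
    (hεU : ∀ x : g, εU (UniversalEnvelopingAlgebra.ι k x) = 0)
    (ΔU : UniversalEnvelopingAlgebra k g →ₐ[k]
      (UniversalEnvelopingAlgebra k g ⊗[k] UniversalEnvelopingAlgebra k g))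
    (hΔU : ∀ x : g, ΔU (UniversalEnvelopingAlgebra.ι k x) =
      (UniversalEnvelopingAlgebra.ι k x) ⊗ₜ 1 + 1 ⊗ₜ (UniversalEnvelopingAlgebra.ι k x))
    (Uh : Subalgebra k (UniversalEnvelopingAlgebra k g))
    (hUh : Uh = Algebra.adjoin k ((UniversalEnvelopingAlgebra.ι k (L := g)) '' h))
    (J : Submodule k (UniversalEnvelopingAlgebra k g))
    (hJ : J = Submodule.span k
      {z | ∃ u v : UniversalEnvelopingAlgebra k g,
        v ∈ Uh ∧ εU v = 0 ∧ z = u * v})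
    (Δq : (UniversalEnvelopingAlgebra k g ⧸ J) →ₗ[k]
      (UniversalEnvelopingAlgebra k g ⧸ J) ⊗[k] (UniversalEnvelopingAlgebra k g ⧸ J))
    (hΔq : Δq ∘ₗ J.mkQ = (TensorProduct.map J.mkQ J.mkQ) ∘ₗ ΔU.toLinearMap)
    (εq : (UniversalEnvelopingAlgebra k g ⧸ J) →ₗ[k] k)
    (hεq : εq ∘ₗ J.mkQ = εU.toLinearMap)
    (Δh : Uh →ₗ[k] (Uh ⊗[k] Uh))
    (hΔh : (TensorProduct.map Uh.val.toLinearMap Uh.val.toLinearMap) ∘ₗ Δh =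
      ΔU.toLinearMap ∘ₗ Uh.val.toLinearMap) :
    ∃ (Ψ : ((UniversalEnvelopingAlgebra k g ⧸ J) ⊗[k] Uh) ≃ₗ[k]
          UniversalEnvelopingAlgebra k g)
      (s : (UniversalEnvelopingAlgebra k g ⧸ J) →ₗ[k] UniversalEnvelopingAlgebra k g),
      (J.mkQ ∘ₗ s = LinearMap.id) ∧
      (∀ (t : UniversalEnvelopingAlgebra k g ⧸ J) (v : Uh),
        Ψ (t ⊗ₜ v) = s t * (v : UniversalEnvelopingAlgebra k g)) ∧
      (ΔU.toLinearMap ∘ₗ Ψ.toLinearMap =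
        (TensorProduct.map Ψ.toLinearMap Ψ.toLinearMap) ∘ₗ
          (TensorProduct.tensorTensorTensorComm k
            (UniversalEnvelopingAlgebra k g ⧸ J) (UniversalEnvelopingAlgebra k g ⧸ J)
            Uh Uh).toLinearMap ∘ₗ
          (TensorProduct.map Δq Δh)) ∧
      (εU.toLinearMap ∘ₗ Ψ.toLinearMap =
        (TensorProduct.lid k k).toLinearMap ∘ₗ
          (TensorProduct.map εq (εU.toLinearMap ∘ₗ Uh.val.toLinearMap))) ∧
      (∃ (act : (Uh ⊗[k] (UniversalEnvelopingAlgebra k g ⧸ J)) →ₗ[k]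
            (UniversalEnvelopingAlgebra k g ⧸ J))
         (ps : (Uh ⊗[k] (UniversalEnvelopingAlgebra k g ⧸ J)) →ₗ[k] Uh)
         (mM : ((UniversalEnvelopingAlgebra k g ⧸ J) ⊗[k]
            (UniversalEnvelopingAlgebra k g ⧸ J)) →ₗ[k]
            (UniversalEnvelopingAlgebra k g ⧸ J))
         (th : ((UniversalEnvelopingAlgebra k g ⧸ J) ⊗[k]
            (UniversalEnvelopingAlgebra k g ⧸ J)) →ₗ[k] Uh),
        Ψ.toLinearMap ∘ₗ
            cdcpMul k (UniversalEnvelopingAlgebra k g ⧸ J) Uh Δq Δh act ps mM th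
              (LinearMap.mul' k Uh) =
          (LinearMap.mul' k (UniversalEnvelopingAlgebra k g)) ∘ₗ
            (TensorProduct.map Ψ.toLinearMap Ψ.toLinearMap)) := by
  obtain rfl : εU = Bialgebra.counitAlgHom k (UniversalEnvelopingAlgebra k g) :=
    PBW.enveloping_algHom_ext fun x => (hεU x).trans (PBW.counit_ι x).symm
  obtain rfl : ΔU = Bialgebra.comulAlgHom k (UniversalEnvelopingAlgebra k g) :=
    PBW.enveloping_algHom_ext fun x => (hΔU x).trans (PBW.comul_ι x).symm
  obtain ⟨I, _, b, S, hS, hle⟩ := PBW.exists_adapted_basis h.toSubmodule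
  have hUhS : Subalgebra.toSubmodule Uh = PBW.monomialSpan k b S :=
    hUh ▸ PBW.toSubmodule_adjoin_ι_image hS
  have hmul := PBW.bijective_mulMap_monomialSpan b hle isCompl_compl.symm
  rw [← hUhS] at hmul
  have : J.IsCoideal := PBW.isCoideal_of_comp_mkQ hΔq hεq
  obtain rfl : Δq = Coalgebra.comul := (LinearMap.cancel_right J.mkQ_surjective).1 hΔq
  obtain rfl : εq = Coalgebra.counit := (LinearMap.cancel_right J.mkQ_surjective).1 hεq
  obtain ⟨r, hr⟩ := Uh.val.toLinearMap.exists_leftInverse_of_injective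
    (LinearMap.ker_eq_bot.2 Subtype.val_injective)
  let _ : Coalgebra k Uh := PBW.coalgebraOfRetract hr Δh hΔh
  let j : Uh →ₗc[k] UniversalEnvelopingAlgebra k g := ⟨Uh.val.toLinearMap, rfl, hΔh⟩
  obtain ⟨s, Ψ, hs, hΨ⟩ := PBW.exists_coalgEquiv_tmul_eq_mul (j := j) hJ hmul
    (fun _ => PBW.comul_mem_range_of_mem_monomialSpan) fun _ => rfl
  refine ⟨Ψ.toLinearEquiv, s.toLinearMap, LinearMap.ext hs, hΨ, Ψ.map_comp_comul.symm,
    Ψ.counit_comp.trans (TensorProduct.ext' fun _ _ => mul_comm _ _),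
    PBW.exists_cdcpMul_eq hΨ fun _ _ => rfl⟩

/-- For a cocycle double cross sum Lie algebra `g = m ⋈_θ h` (i.e. `h` a
Lie subalgebra, `m` a complementary subspace), with `Ũ(m) := U(g)/U(g)U(h)⁺`, the
multiplication map `Ũ(m) ⊗ U(h) → U(g)` (induced by a PBW basis adapted to the
decomposition, i.e. of the form `t ⊗ v ↦ s(t)·v` for a linear section `s` of the
quotient map) is an isomorphism of coalgebras, and consequently
`U(m ⋈_θ h) ≅ Ũ(m) ⋈_θ U(h)` as bialgebras: the multiplication transported along this
isomorphism is a cocycle double cross product multiplication. -/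
theorem enveloping_algebra_cocycle_double_cross_product
    (g : Type*) [LieRing g] [LieAlgebra k g] [FiniteDimensional k g]
    (m : Submodule k g) (h : LieSubalgebra k g)
    (hcompl : IsCompl m h.toSubmodule)
    -- the standard bialgebra structure maps of `U(g)`
    (εU : UniversalEnvelopingAlgebra k g →ₐ[k] k)
    (hεU : ∀ x : g, εU (UniversalEnvelopingAlgebra.ι k x) = 0)
    (ΔU : UniversalEnvelopingAlgebra k g →ₐ[k]
      (UniversalEnvelopingAlgebra k g ⊗[k] UniversalEnvelopingAlgebra k g))
    (hΔU : ∀ x : g, ΔU (UniversalEnvelopingAlgebra.ι k x) =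
      (UniversalEnvelopingAlgebra.ι k x) ⊗ₜ 1 + 1 ⊗ₜ (UniversalEnvelopingAlgebra.ι k x))
    -- `U(h)` as the subalgebra of `U(g)` generated by `h`
    (Uh : Subalgebra k (UniversalEnvelopingAlgebra k g))
    (hUh : Uh = Algebra.adjoin k ((UniversalEnvelopingAlgebra.ι k (L := g)) '' h))
    -- the left ideal `U(g)U(h)⁺`
    (J : Submodule k (UniversalEnvelopingAlgebra k g))
    (hJ : J = Submodule.span k
      {z | ∃ u v : UniversalEnvelopingAlgebra k g,
        v ∈ Uh ∧ εU v = 0 ∧ z = u * v})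
    -- the induced coalgebra structures on `Ũ(m) = U(g)/J` and on `U(h)`
    (Δq : (UniversalEnvelopingAlgebra k g ⧸ J) →ₗ[k]
      (UniversalEnvelopingAlgebra k g ⧸ J) ⊗[k] (UniversalEnvelopingAlgebra k g ⧸ J))
    (hΔq : Δq ∘ₗ J.mkQ = (TensorProduct.map J.mkQ J.mkQ) ∘ₗ ΔU.toLinearMap)
    (εq : (UniversalEnvelopingAlgebra k g ⧸ J) →ₗ[k] k)
    (hεq : εq ∘ₗ J.mkQ = εU.toLinearMap)
    (Δh : Uh →ₗ[k] (Uh ⊗[k] Uh))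
    (hΔh : (TensorProduct.map Uh.val.toLinearMap Uh.val.toLinearMap) ∘ₗ Δh =
      ΔU.toLinearMap ∘ₗ Uh.val.toLinearMap) :
    ∃ (Ψ : ((UniversalEnvelopingAlgebra k g ⧸ J) ⊗[k] Uh) ≃ₗ[k]
          UniversalEnvelopingAlgebra k g)
      (s : (UniversalEnvelopingAlgebra k g ⧸ J) →ₗ[k] UniversalEnvelopingAlgebra k g),
      -- `s` is a linear section of the quotient map (a PBW-adapted choice of
      -- representatives), and `Ψ` is the induced multiplication map
      (J.mkQ ∘ₗ s = LinearMap.id) ∧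
      (∀ (t : UniversalEnvelopingAlgebra k g ⧸ J) (v : Uh),
        Ψ (t ⊗ₜ v) = s t * (v : UniversalEnvelopingAlgebra k g)) ∧
      -- `Ψ` is a morphism of coalgebras
      (ΔU.toLinearMap ∘ₗ Ψ.toLinearMap =
        (TensorProduct.map Ψ.toLinearMap Ψ.toLinearMap) ∘ₗ
          (TensorProduct.tensorTensorTensorComm k
            (UniversalEnvelopingAlgebra k g ⧸ J) (UniversalEnvelopingAlgebra k g ⧸ J)
            Uh Uh).toLinearMap ∘ₗ
          (TensorProduct.map Δq Δh)) ∧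
      (εU.toLinearMap ∘ₗ Ψ.toLinearMap =
        (TensorProduct.lid k k).toLinearMap ∘ₗ
          (TensorProduct.map εq (εU.toLinearMap ∘ₗ Uh.val.toLinearMap))) ∧
      -- consequently `U(g) ≅ Ũ(m) ⋈_θ U(h)` as bialgebras: the multiplication of
      -- `U(g)` transported along `Ψ` is a cocycle double cross product multiplication
      (∃ (act : (Uh ⊗[k] (UniversalEnvelopingAlgebra k g ⧸ J)) →ₗ[k]
            (UniversalEnvelopingAlgebra k g ⧸ J))
         (ps : (Uh ⊗[k] (UniversalEnvelopingAlgebra k g ⧸ J)) →ₗ[k] Uh)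
         (mM : ((UniversalEnvelopingAlgebra k g ⧸ J) ⊗[k]
            (UniversalEnvelopingAlgebra k g ⧸ J)) →ₗ[k]
            (UniversalEnvelopingAlgebra k g ⧸ J))
         (th : ((UniversalEnvelopingAlgebra k g ⧸ J) ⊗[k]
            (UniversalEnvelopingAlgebra k g ⧸ J)) →ₗ[k] Uh),
        Ψ.toLinearMap ∘ₗ
            cdcpMul k (UniversalEnvelopingAlgebra k g ⧸ J) Uh Δq Δh act ps mM th
              (LinearMap.mul' k Uh) =
          (LinearMap.mul' k (UniversalEnvelopingAlgebra k g)) ∘ₗ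
            (TensorProduct.map Ψ.toLinearMap Ψ.toLinearMap)) :=
  enveloping_algebra_cocycle_double_cross_product_general k g h εU hεU ΔU hΔU Uh hUh J hJ Δq hΔq
    εq hεq Δh hΔh

end
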